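/- Let R be an associative ring with identity and Q a left rooted quiver. Let W and X be classes of left R-modules such that: X is closed under extensions; (W, W^⊥) is a complete cotorsion pair in Mod(R); and Ext^1_R(X,W) = 0 for all X ∈ X and all W ∈ W ∩ W^⊥. If W is a cogenerator for X, then Φ(W) is a cogenerator for Φ(X) in Rep(Q,R): for every representation X ∈ Φ(X) there is a short exact sequence 0 → X → W → Y → 0 in Rep(Q,R) with W ∈ Φ(W) and Y ∈ Φ(X). -/

import Mathlib

open CategoryTheory CategoryTheory.Limits Opposite
open scoped DirectSum

universe w v u

namespace QuiverGF


section Cat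

variable {A : Type u} [Category.{v} A] [Abelian A]

/-- `Ext¹(X,Y) = 0`, expressed as: every short exact sequence `0 → Y → E → X → 0` splits. -/
def ext1Zero (X Y : A) : Prop :=
  ∀ (E : A) (f : Y ⟶ E) (g : E ⟶ X) (w : f ≫ g = 0),
    (ShortComplex.mk f g w).ShortExact → ∃ s : X ⟶ E, s ≫ g = 𝟙 X

/-- `extHigherZero n X Y` encodes `Ext^{n+1}(X,Y) = 0`, defined by dimension shifting along
short exact sequences `0 → Y → I → Z → 0` with `I` injective. -/
def extHigherZero : ℕ → A → A → Prop
  | 0 => fun X Y => ext1Zero X Y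
  | n + 1 => fun X Y => ∀ (I Z : A) (f : Y ⟶ I) (g : I ⟶ Z) (w : f ≫ g = 0),
      Injective I → (ShortComplex.mk f g w).ShortExact → extHigherZero n X Z

/-- The right `Ext¹`-orthogonal class. -/
def rightPerp (S : Set A) : Set A := {Y | ∀ X ∈ S, ext1Zero X Y}

/-- The left `Ext¹`-orthogonal class. -/
def leftPerp (S : Set A) : Set A := {X | ∀ Y ∈ S, ext1Zero X Y}

/-- `(X, Y)` is a cotorsion pair. -/
structure IsCotorsionPair (X Y : Set A) : Prop where
  right_eq : Y = rightPerp X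
  left_eq : X = leftPerp Y

/-- Completeness of a pair of classes: every object admits approximation sequences. -/
def IsCompleteCP (X Y : Set A) : Prop :=
  (∀ M : A, ∃ (YM XM : A) (f : M ⟶ YM) (g : YM ⟶ XM) (w : f ≫ g = 0),
     (ShortComplex.mk f g w).ShortExact ∧ YM ∈ Y ∧ XM ∈ X) ∧
  (∀ M : A, ∃ (YM XM : A) (f : YM ⟶ XM) (g : XM ⟶ M) (w : f ≫ g = 0),
     (ShortComplex.mk f g w).ShortExact ∧ YM ∈ Y ∧ XM ∈ X)

/-- Heredity: `Ext^i(X,Y) = 0` for all `i ≥ 1`. -/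
def IsHereditaryCP (X Y : Set A) : Prop :=
  ∀ M ∈ X, ∀ N ∈ Y, ∀ n : ℕ, extHigherZero n M N

/-- A thick class of objects. -/
structure IsThick (W : Set A) : Prop where
  summand : ∀ Z ∈ W, ∀ (X : A) (i : X ⟶ Z) (r : Z ⟶ X), i ≫ r = 𝟙 X → X ∈ W
  ext_closed : ∀ (S : ShortComplex A), S.ShortExact → S.X₁ ∈ W → S.X₃ ∈ W → S.X₂ ∈ W
  ker_epi : ∀ (S : ShortComplex A), S.ShortExact → S.X₂ ∈ W → S.X₃ ∈ W → S.X₁ ∈ W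
  coker_mono : ∀ (S : ShortComplex A), S.ShortExact → S.X₁ ∈ W → S.X₂ ∈ W → S.X₃ ∈ W

/-- A Hovey triple. -/
structure IsHoveyTriple (C W F : Set A) : Prop where
  thick : IsThick W
  cp1 : IsCotorsionPair C (W ∩ F)
  cp1_complete : IsCompleteCP C (W ∩ F)
  cp2 : IsCotorsionPair (C ∩ W) F
  cp2_complete : IsCompleteCP (C ∩ W) F

/-- A hereditary Hovey triple. -/
structure IsHereditaryHoveyTriple (C W F : Set A) extends IsHoveyTriple C W F : Prop where
  cp1_hereditary : IsHereditaryCP C (W ∩ F)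
  cp2_hereditary : IsHereditaryCP (C ∩ W) F

/-- `f : C ⟶ M` is an `S`-cover of `M`. -/
def IsCover (S : Set A) {C M : A} (f : C ⟶ M) : Prop :=
  C ∈ S ∧ (∀ C' ∈ S, ∀ g : C' ⟶ M, ∃ h : C' ⟶ C, h ≫ f = g) ∧
    (∀ h : C ⟶ C, h ≫ f = f → IsIso h)

/-- `f : M ⟶ E` is an `S`-envelope of `M`. -/
def IsEnvelope (S : Set A) {M E : A} (f : M ⟶ E) : Prop :=
  E ∈ S ∧ (∀ E' ∈ S, ∀ g : M ⟶ E', ∃ h : E ⟶ E', f ≫ h = g) ∧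
    (∀ h : E ⟶ E, f ≫ h = f → IsIso h)

/-- A perfect pair of classes: X-covers and Y-envelopes always exist. -/
def IsPerfectCP (X Y : Set A) : Prop :=
  (∀ M : A, ∃ (C : A) (f : C ⟶ M), IsCover X f) ∧
  (∀ M : A, ∃ (E : A) (f : M ⟶ E), IsEnvelope Y f)

/-- `W` is a cogenerator for `X`. -/
def IsCogenerator (W X : Set A) : Prop :=
  W ⊆ X ∧ ∀ M ∈ X, ∃ (W' X' : A) (f : M ⟶ W') (g : W' ⟶ X') (w : f ≫ g = 0),
    (ShortComplex.mk f g w).ShortExact ∧ W' ∈ W ∧ X' ∈ X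

end Cat

section Quiver

variable (V : Type w) [Quiver.{w} V]

/-- A quiver is left rooted if it has no infinite sequence of arrows `• → • → • → ⋯`. -/
def LeftRooted : Prop := ¬ ∃ f : ℕ → V, ∀ n : ℕ, Nonempty (f n ⟶ f (n + 1))

variable {V}
variable {A : Type u} [Category.{v} A]

/-- A vertex of `V`, seen as an object of the path category. -/
abbrev vtx (i : V) : Paths V := i

section Phi

variable [Abelian A] [HasCoproducts.{w} A]

/-- The canonical morphism `φᵢˣ : ⊕_{a : j ⟶ i} X(j) ⟶ X(i)`. -/
noncomputable def phi (X : Paths V ⥤ A) (i : V) :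
    (∐ fun p : Σ j : V, j ⟶ i => X.obj (vtx p.1)) ⟶ X.obj (vtx i) :=
  Sigma.desc fun p => X.map p.2.toPath

/-- The class `Φ(S)` of representations. -/
noncomputable def PhiClass (S : Set A) : Set (Paths V ⥤ A) :=
  {X | ∀ i : V, Mono (phi X i) ∧ X.obj (vtx i) ∈ S ∧ cokernel (phi X i) ∈ S}

end Phi

/-- The class of representations with all vertex values in `S`. -/
def RepClass (S : Set A) : Set (Paths V ⥤ A) := {X | ∀ i : V, X.obj (vtx i) ∈ S}

section Psi

variable [Abelian A] [HasProducts.{w} A]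

/-- The canonical morphism `ψᵢʸ : Y(i) ⟶ Π_{a : i ⟶ j} Y(j)`. -/
noncomputable def psi (Y : Paths V ⥤ A) (i : V) :
    Y.obj (vtx i) ⟶ ∏ᶜ fun p : Σ j : V, i ⟶ j => Y.obj (vtx p.1) :=
  Pi.lift fun p => Y.map p.2.toPath

/-- The class `Ψ(S)` of representations. -/
noncomputable def PsiClass (S : Set A) : Set (Paths V ⥤ A) :=
  {Y | ∀ i : V, Epi (psi Y i) ∧ Y.obj (vtx i) ∈ S ∧ kernel (psi Y i) ∈ S}

end Psi

end Quiver




section NcTensor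

variable (R : Type u) [Ring R]

variable (E : Type u) [AddCommGroup E] [Module Rᵐᵒᵖ E]
variable (M : Type u) [AddCommGroup M] [Module R M]

/-- The defining relations of the tensor product `E ⊗_R M` of a right `R`-module `E`
and a left `R`-module `M` over a (possibly noncommutative) ring `R`. -/
def ncRel : Submodule ℤ (TensorProduct ℤ E M) :=
  Submodule.span ℤ {z | ∃ (e : E) (r : R) (m : M),
    z = (MulOpposite.op r • e) ⊗ₜ[ℤ] m - e ⊗ₜ[ℤ] (r • m)}

/-- The tensor product `E ⊗_R M` of a right `R`-module `E` and a left `R`-module `M`. -/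
abbrev NcTensor := TensorProduct ℤ E M ⧸ ncRel R E M

noncomputable instance NcTensor.instAddCommMonoid : AddCommMonoid (NcTensor R E M) :=
  (Submodule.Quotient.addCommGroup (ncRel R E M)).toAddCommMonoid

/-- The canonical generator `e ⊗ m` of `E ⊗_R M`. -/
noncomputable def NcTensor.tmul (e : E) (m : M) : NcTensor R E M :=
  Submodule.Quotient.mk (e ⊗ₜ[ℤ] m)

variable {E M}
variable {E' : Type u} [AddCommGroup E'] [Module Rᵐᵒᵖ E']
variable {M' : Type u} [AddCommGroup M'] [Module R M']

/-- Functoriality of the tensor product. -/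
noncomputable def NcTensor.map (f : E →ₗ[Rᵐᵒᵖ] E') (g : M →ₗ[R] M') :
    NcTensor R E M →ₗ[ℤ] NcTensor R E' M' :=
  Submodule.mapQ _ _
    (TensorProduct.map f.toAddMonoidHom.toIntLinearMap g.toAddMonoidHom.toIntLinearMap)
    (by
      refine Submodule.span_le.2 ?_
      rintro z ⟨e, r, m, rfl⟩
      refine Submodule.mem_comap.2 (Submodule.subset_span ?_)
      exact ⟨f e, r, g m, by
        have h : TensorProduct.map f.toAddMonoidHom.toIntLinearMap g.toAddMonoidHom.toIntLinearMap
            ((MulOpposite.op r • e) ⊗ₜ[ℤ] m - e ⊗ₜ[ℤ] (r • m))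
            = (MulOpposite.op r • f e) ⊗ₜ[ℤ] g m - f e ⊗ₜ[ℤ] (r • g m) := by
          simp [TensorProduct.map_tmul, map_smul]
        exact h⟩)

@[simp] lemma NcTensor.map_tmul (f : E →ₗ[Rᵐᵒᵖ] E') (g : M →ₗ[R] M') (e : E) (m : M) :
    NcTensor.map R f g (NcTensor.tmul R E M e m) = NcTensor.tmul R E' M' (f e) (g m) := by
  rfl

end NcTensor

section ModuleClasses

variable (R : Type u) [Ring R]

/-- A left `R`-module is flat if tensoring with it preserves injections of right `R`-modules. -/
def IsFlatModule (M : ModuleCat.{u} R) : Prop :=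
  ∀ (E E' : ModuleCat.{u} Rᵐᵒᵖ) (f : E ⟶ E'), Function.Injective f →
    Function.Injective (NcTensor.map R (f.hom : ↑E →ₗ[Rᵐᵒᵖ] ↑E') (LinearMap.id (M := ↑M)))

/-- Gorenstein flat left `R`-modules: cycles of exact complexes of flat modules which stay
exact after tensoring with any injective right `R`-module. -/
def IsGorensteinFlatModule (M : ModuleCat.{u} R) : Prop :=
  ∃ (F : ℤ → ModuleCat.{u} R) (d : ∀ n : ℤ, F n ⟶ F (n + 1)),
    (∀ n, IsFlatModule R (F n)) ∧
    (∀ n, Function.Exact (d n) (d (n + 1))) ∧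
    Nonempty (↑M ≃ₗ[R] ↥(LinearMap.ker ((d 0).hom : ↑(F 0) →ₗ[R] ↑(F (0 + 1))))) ∧
    ∀ (E : ModuleCat.{u} Rᵐᵒᵖ), Injective E → ∀ n : ℤ,
      Function.Exact (NcTensor.map R (LinearMap.id (M := ↑E)) ((d n).hom : ↑(F n) →ₗ[R] ↑(F (n + 1))))
        (NcTensor.map R (LinearMap.id (M := ↑E)) ((d (n + 1)).hom : ↑(F (n + 1)) →ₗ[R] ↑(F (n + 1 + 1))))

/-- Projectively coresolved Gorenstein flat left `R`-modules. -/
def IsPGFModule (M : ModuleCat.{u} R) : Prop :=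
  ∃ (P : ℤ → ModuleCat.{u} R) (d : ∀ n : ℤ, P n ⟶ P (n + 1)),
    (∀ n, Projective (P n)) ∧
    (∀ n, Function.Exact (d n) (d (n + 1))) ∧
    Nonempty (↑M ≃ₗ[R] ↥(LinearMap.ker ((d 0).hom : ↑(P 0) →ₗ[R] ↑(P (0 + 1))))) ∧
    ∀ (E : ModuleCat.{u} Rᵐᵒᵖ), Injective E → ∀ n : ℤ,
      Function.Exact (NcTensor.map R (LinearMap.id (M := ↑E)) ((d n).hom : ↑(P n) →ₗ[R] ↑(P (n + 1))))
        (NcTensor.map R (LinearMap.id (M := ↑E)) ((d (n + 1)).hom : ↑(P (n + 1)) →ₗ[R] ↑(P (n + 1 + 1))))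

/-- Gorenstein injective objects of an abelian category. -/
def IsGorensteinInjective {A : Type*} [Category A] [Abelian A] (M : A) : Prop :=
  ∃ (I : ℤ → A) (d : ∀ n : ℤ, I n ⟶ I (n + 1)),
    (∀ n, Injective (I n)) ∧
    (∀ n, ∃ w : d n ≫ d (n + 1) = 0, (ShortComplex.mk (d n) (d (n + 1)) w).Exact) ∧
    Nonempty (M ≅ kernel (d 0)) ∧
    ∀ (E : A), Injective E → ∀ n : ℤ,
      Function.Exact (fun f : E ⟶ I n => f ≫ d n) (fun f : E ⟶ I (n + 1) => f ≫ d (n + 1))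

end ModuleClasses



section Char

variable (R : Type u) [Ring R] (G : Type u) [AddCommGroup G]

section Left
variable (M : Type u) [AddCommGroup M] [Module R M]

/-- Right `R`-action on `Hom_ℤ(M, G)` for a left `R`-module `M`. -/
instance : SMul Rᵐᵒᵖ (M →+ G) :=
  ⟨fun r f => f.comp (DistribMulAction.toAddMonoidHom M r.unop)⟩

@[simp] lemma op_smul_addHom_apply (r : Rᵐᵒᵖ) (f : M →+ G) (m : M) :
    (r • f) m = f (r.unop • m) := rfl

instance charRight : Module Rᵐᵒᵖ (M →+ G) where
  one_smul f := AddMonoidHom.ext fun m => by simp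
  mul_smul r s f := AddMonoidHom.ext fun m => by simp [mul_smul]
  smul_zero r := AddMonoidHom.ext fun m => rfl
  smul_add r f g := AddMonoidHom.ext fun m => rfl
  add_smul r s f := AddMonoidHom.ext fun m => by simp [add_smul]
  zero_smul f := AddMonoidHom.ext fun m => by simp

end Left

section Right
variable (N : Type u) [AddCommGroup N] [Module Rᵐᵒᵖ N]

/-- Left `R`-action on `Hom_ℤ(N, G)` for a right `R`-module `N`. -/
instance : SMul R (N →+ G) :=
  ⟨fun r f => f.comp (DistribMulAction.toAddMonoidHom N (MulOpposite.op r))⟩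

@[simp] lemma smul_addHom_apply (r : R) (f : N →+ G) (n : N) :
    (r • f) n = f (MulOpposite.op r • n) := rfl

instance charLeft : Module R (N →+ G) where
  one_smul f := AddMonoidHom.ext fun n => by simp
  mul_smul r s f := AddMonoidHom.ext fun n => by simp [MulOpposite.op_mul, mul_smul]
  smul_zero r := AddMonoidHom.ext fun n => rfl
  smul_add r f g := AddMonoidHom.ext fun n => rfl
  add_smul r s f := AddMonoidHom.ext fun n => by simp [add_smul]
  zero_smul f := AddMonoidHom.ext fun n => by simp

end Right

section Precomp

variable {R G}
variable {M N : Type u} [AddCommGroup M] [AddCommGroup N] [Module R M] [Module R N]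

/-- Precomposition, as an `Rᵐᵒᵖ`-linear map between character modules. -/
def precompHom (h : M →ₗ[R] N) : (N →+ G) →ₗ[Rᵐᵒᵖ] (M →+ G) where
  toFun f := f.comp h.toAddMonoidHom
  map_add' f g := rfl
  map_smul' r f := AddMonoidHom.ext fun m => by simp [map_smul]

variable {P Q : Type u} [AddCommGroup P] [AddCommGroup Q] [Module Rᵐᵒᵖ P] [Module Rᵐᵒᵖ Q]

/-- Precomposition, as an `R`-linear map between character modules of right modules. -/
def precompHomOp (h : P →ₗ[Rᵐᵒᵖ] Q) : (Q →+ G) →ₗ[R] (P →+ G) where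
  toFun f := f.comp h.toAddMonoidHom
  map_add' f g := rfl
  map_smul' r f := AddMonoidHom.ext fun p => by simp [map_smul]

end Precomp

end Char


section Reps

variable (V : Type u) [Quiver.{u} V] (R : Type u) [Ring R]

/-- The category of representations of the quiver `V` with values in left `R`-modules. -/
abbrev RepL := Paths V ⥤ ModuleCat.{u} R

/-- The category of representations of the opposite quiver with values in right `R`-modules. -/
abbrev RepR := Paths Vᵒᵖ ⥤ ModuleCat.{u} Rᵐᵒᵖ

/-- A vertex of `V`, seen as an object of the path category. -/
abbrev vtx' {V : Type u} [Quiver.{u} V] (i : V) : Paths V := i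

/-- The representation `Hom(X, G) ∈ Rep(Qᵒᵖ, Rᵒᵖ)`, given vertexwise by `Hom_ℤ(X(i), G)`. -/
noncomputable def HomRepObj (X : RepL V R) (G : Type u) [AddCommGroup G] : RepR V R :=
  Paths.lift
    { obj := fun x => ModuleCat.of Rᵐᵒᵖ (↑(X.obj (vtx' x.unop)) →+ G)
      map := fun {x y} a =>
        ModuleCat.ofHom (precompHom (G := G) ((X.map a.unop.toPath).hom : ↑(X.obj (vtx' y.unop)) →ₗ[R] ↑(X.obj (vtx' x.unop))) :
          _ →ₗ[Rᵐᵒᵖ] _) }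

/-- The representation `Hom(Y, G) ∈ Rep(Q, R)` for `Y ∈ Rep(Qᵒᵖ, Rᵒᵖ)`. -/
noncomputable def HomRepObjOp (Y : RepR V R) (G : Type u) [AddCommGroup G] : RepL V R :=
  Paths.lift
    { obj := fun i => ModuleCat.of R (↑(Y.obj (vtx' (op i))) →+ G)
      map := fun {i j} a =>
        ModuleCat.ofHom (precompHomOp (G := G) ((Y.map a.op.toPath).hom : ↑(Y.obj (vtx' (op j))) →ₗ[Rᵐᵒᵖ] ↑(Y.obj (vtx' (op i)))) :
          _ →ₗ[R] _) }

/-- The character representation `X⁺ = Hom(X, ℚ/ℤ)`. -/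
noncomputable def charRep (X : RepL V R) : RepR V R :=
  HomRepObj V R X (ULift.{u} (AddCircle (1 : ℚ)))

section Tensor

variable {V R}

/-- The underlying group of the tensor product of representations before dividing out
by the relations coming from arrows. -/
noncomputable abbrev repTensorBase (Y : RepR V R) (X : RepL V R) : Type u :=
  ⨁ (i : V), NcTensor R (↑(Y.obj (vtx' (op i)))) (↑(X.obj (vtx' i)))

open scoped Classical in
/-- The relations defining the tensor product of representations. -/
noncomputable def repTensorRel (Y : RepR V R) (X : RepL V R) :
    Submodule ℤ (repTensorBase Y X) :=
  Submodule.span ℤ {z | ∃ (i j : V) (a : i ⟶ j) (y : ↑(Y.obj (vtx' (op j)))) (x : ↑(X.obj (vtx' i))),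
    z = DirectSum.of _ i (NcTensor.tmul R _ _ (Y.map a.op.toPath y) x)
      - DirectSum.of _ j (NcTensor.tmul R _ _ y (X.map a.toPath x))}

/-- The tensor product `Y ⊗_Q X` of representations, for `Y ∈ Rep(Qᵒᵖ, Rᵒᵖ)` and
`X ∈ Rep(Q, R)`. -/
noncomputable abbrev RepTensor (Y : RepR V R) (X : RepL V R) : Type u :=
  repTensorBase Y X ⧸ repTensorRel Y X

open scoped Classical in
/-- Functoriality of the tensor product of representations. -/
noncomputable def RepTensor.map {Y Y' : RepR V R} {X X' : RepL V R}
    (g : Y ⟶ Y') (f : X ⟶ X') : RepTensor Y X →ₗ[ℤ] RepTensor Y' X' :=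
  Submodule.mapQ _ _
    (DirectSum.toModule ℤ V (repTensorBase Y' X') fun i =>
      (DirectSum.lof ℤ V _ i).comp
        (NcTensor.map R ((g.app (vtx' (op i))).hom : _ →ₗ[Rᵐᵒᵖ] _) ((f.app (vtx' i)).hom : _ →ₗ[R] _)))
    (by
      refine Submodule.span_le.2 ?_
      rintro z ⟨i, j, a, y, x, rfl⟩
      refine Submodule.mem_comap.2 ?_
      rw [map_sub, ← DirectSum.lof_eq_of ℤ, ← DirectSum.lof_eq_of ℤ,
        DirectSum.toModule_lof, DirectSum.toModule_lof]
      refine Submodule.subset_span ?_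
      refine ⟨i, j, a, g.app (vtx' (op j)) y, f.app (vtx' i) x, ?_⟩
      have hg : g.app (vtx' (op i)) (Y.map a.op.toPath y)
          = Y'.map a.op.toPath (g.app (vtx' (op j)) y) := by
        have h := g.naturality (a.op.toPath : vtx' (op j) ⟶ vtx' (op i))
        exact ConcreteCategory.congr_hom h y
      have hf : f.app (vtx' j) (X.map a.toPath x)
          = X'.map a.toPath (f.app (vtx' i) x) := by
        have h := f.naturality (a.toPath : vtx' i ⟶ vtx' j)
        exact ConcreteCategory.congr_hom h x
      simp only [LinearMap.comp_apply, NcTensor.map_tmul, DirectSum.lof_eq_of]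
      rw [hg, hf])

end Tensor

end Reps




section More

variable (V : Type u) [Quiver.{u} V] (R : Type u) [Ring R]

/-- Cotorsion left `R`-modules. -/
def IsCotorsionModule (M : ModuleCat.{u} R) : Prop :=
  ∀ F : ModuleCat.{u} R, IsFlatModule R F → ext1Zero F M

/-- A right coherent ring: every finitely generated right ideal is finitely presented. -/
def RightCoherent : Prop :=
  ∀ I : Submodule Rᵐᵒᵖ R, I.FG → Module.FinitePresentation Rᵐᵒᵖ ↥I

/-- Flat representations: colimits of projective representations. -/
def IsFlatRep (Xr : RepL V R) : Prop :=
  ∃ (J : Cat.{u, u}) (D : ↥J ⥤ RepL V R) (c : Limits.Cocone D),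
    (∀ j, Projective (D.obj j)) ∧ Nonempty (Limits.IsColimit c) ∧ Nonempty (c.pt ≅ Xr)

/-- Gorenstein flat representations. -/
def IsGorensteinFlatRep (Xr : RepL V R) : Prop :=
  ∃ (F : ℤ → RepL V R) (d : ∀ n : ℤ, F (n + 1) ⟶ F n),
    (∀ n, IsFlatRep V R (F n)) ∧
    (∀ n, ∃ w : d (n + 1) ≫ d n = 0, (ShortComplex.mk (d (n + 1)) (d n) w).Exact) ∧
    Nonempty (Xr ≅ cokernel (d 0)) ∧
    ∀ (E : RepR V R), Injective E → ∀ n : ℤ,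
      Function.Exact (RepTensor.map (𝟙 E) (d (n + 1))) (RepTensor.map (𝟙 E) (d n))

/-- Projectively coresolved Gorenstein flat representations. -/
def IsPGFRep (Xr : RepL V R) : Prop :=
  ∃ (P : ℤ → RepL V R) (d : ∀ n : ℤ, P (n + 1) ⟶ P n),
    (∀ n, Projective (P n)) ∧
    (∀ n, ∃ w : d (n + 1) ≫ d n = 0, (ShortComplex.mk (d (n + 1)) (d n) w).Exact) ∧
    Nonempty (Xr ≅ cokernel (d 0)) ∧
    ∀ (E : RepR V R), Injective E → ∀ n : ℤ,
      Function.Exact (RepTensor.map (𝟙 E) (d (n + 1))) (RepTensor.map (𝟙 E) (d n))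

end More

section Swap

variable (R : Type u) [Ring R]
variable (M : Type u) [AddCommGroup M] [Module R M]
variable (E : Type u) [AddCommGroup E] [Module Rᵐᵒᵖ E]

/-- Relations for the tensor product `M ⊗_{Rᵒᵖ} E` of a right `Rᵒᵖ`-module `M`
and a left `Rᵒᵖ`-module `E`. -/
def ncRel' : Submodule ℤ (TensorProduct ℤ M E) :=
  Submodule.span ℤ {z | ∃ (m : M) (r : R) (e : E),
    z = (r • m) ⊗ₜ[ℤ] e - m ⊗ₜ[ℤ] (MulOpposite.op r • e)}

/-- The tensor product `M ⊗_{Rᵒᵖ} E`. -/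
abbrev NcTensorSwap := TensorProduct ℤ M E ⧸ ncRel' R M E

noncomputable instance NcTensorSwap.instAddCommMonoid : AddCommMonoid (NcTensorSwap R M E) :=
  (Submodule.Quotient.addCommGroup (ncRel' R M E)).toAddCommMonoid

variable {M E}

/-- The generator `m ⊗ e` of `M ⊗_{Rᵒᵖ} E`. -/
noncomputable def NcTensorSwap.tmul (m : M) (e : E) : NcTensorSwap R M E :=
  Submodule.Quotient.mk (m ⊗ₜ[ℤ] e)

variable (V : Type u) [Quiver.{u} V]

/-- The base of the tensor product `X ⊗_{Qᵒᵖ} Y`. -/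
noncomputable abbrev repTensorSwapBase (X : RepL V R) (Y : RepR V R) : Type u :=
  ⨁ (i : V), NcTensorSwap R (↑(X.obj i)) (↑(Y.obj (op i)))

open scoped Classical in
/-- The relations of the tensor product `X ⊗_{Qᵒᵖ} Y`. -/
noncomputable def repTensorSwapRel (X : RepL V R) (Y : RepR V R) :
    Submodule ℤ (repTensorSwapBase R V X Y) :=
  Submodule.span ℤ {z | ∃ (j i : V) (a : j ⟶ i) (x : ↑(X.obj j)) (y : ↑(Y.obj (op i))),
    z = DirectSum.of _ i (NcTensorSwap.tmul R (X.map a.toPath x) y)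
      - DirectSum.of _ j (NcTensorSwap.tmul R x (Y.map a.op.toPath y))}

/-- The tensor product `X ⊗_{Qᵒᵖ} Y` of representations, i.e. the tensor product over the
opposite quiver of the opposite ring. -/
noncomputable abbrev RepTensorSwap (X : RepL V R) (Y : RepR V R) : Type u :=
  repTensorSwapBase R V X Y ⧸ repTensorSwapRel R V X Y

end Swap

section Eval

variable {V : Type u} [Quiver.{u} V] {R : Type u} [Ring R]

/-- Evaluation helper identifying the vertex value of `Hom(X, G)` with `Hom_ℤ(X(i), G)`. -/
def homRepEval (X : RepL V R) (G : Type u) [AddCommGroup G] {v : Vᵒᵖ}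
    (s : ↑((HomRepObj V R X G).obj v)) : ↑(X.obj v.unop) →+ G := s

/-- Evaluation helper identifying the vertex value of `Hom(Y, G)` with `Hom_ℤ(Y(i), G)`. -/
def homRepOpEval (Y : RepR V R) (G : Type u) [AddCommGroup G] {i : V}
    (s : ↑((HomRepObjOp V R Y G).obj i)) : ↑(Y.obj (op i)) →+ G := s

end Eval

end QuiverGF

namespace QuiverGF
section Aux
variable {R : Type u} [Ring R]

lemma se_mk {A B C : Type u} [AddCommGroup A] [AddCommGroup B] [AddCommGroup C]
    [Module R A] [Module R B] [Module R C] (f : A →ₗ[R] B) (g : B →ₗ[R] C)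
    (hf : Function.Injective f) (he : Function.Exact f g) (hg : Function.Surjective g) :
    ∃ w : ModuleCat.ofHom f ≫ ModuleCat.ofHom g = 0,
      (ShortComplex.mk (ModuleCat.ofHom f) (ModuleCat.ofHom g) w).ShortExact := by
  refine ⟨?_, ?_⟩
  · ext x
    exact he.apply_apply_eq_zero x
  · exact ModuleCat.shortComplex_shortExact _ he hf hg

lemma ext_of_se {X₁ X₂ X₃ : ModuleCat.{u} R} (f : X₁ ⟶ X₂) (g : X₂ ⟶ X₃) (w : f ≫ g = 0)
    (h : (ShortComplex.mk f g w).ShortExact) :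
    Function.Injective f.hom ∧ Function.Exact f.hom g.hom ∧ Function.Surjective g.hom :=
  ⟨h.moduleCat_injective_f,
    (ShortComplex.ShortExact.moduleCat_exact_iff_function_exact _).1 h.exact,
    h.moduleCat_surjective_g⟩

/-- lifting property from vanishing of Ext -/
lemma lift_of_ext {X N : ModuleCat.{u} R} (h : ext1Zero X N) {E B : Type u}
    [AddCommGroup E] [AddCommGroup B] [Module R E] [Module R B]
    (k : N →ₗ[R] E) (p : E →ₗ[R] B) (hk : Function.Injective k) (he : Function.Exact k p)
    (hp : Function.Surjective p) (g : X →ₗ[R] B) : ∃ l : X →ₗ[R] E, p ∘ₗ l = g := by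
  let S : Submodule R (E × X) :=
    LinearMap.eqLocus (p ∘ₗ LinearMap.fst R E X) (g ∘ₗ LinearMap.snd R E X)
  let k' : N →ₗ[R] S := LinearMap.codRestrict S (LinearMap.inl R E X ∘ₗ k) (fun n => by
    simp [S, LinearMap.mem_eqLocus, he.apply_apply_eq_zero])
  let p' : S →ₗ[R] X := LinearMap.snd R E X ∘ₗ S.subtype
  obtain ⟨w, hse⟩ := se_mk k' p' (fun a b hab => hk (by
      exact congrArg (fun z : S => z.1.1) hab)) (fun s => by
      constructor
      · intro hs
        have h1 : p s.1.1 = g s.1.2 := s.2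
        have h2 : s.1.2 = 0 := hs
        rw [h2, map_zero] at h1
        obtain ⟨n, hn⟩ := (he _).1 h1
        exact ⟨n, Subtype.ext (Prod.ext hn h2.symm)⟩
      · rintro ⟨n, rfl⟩
        rfl) (fun x => by
      obtain ⟨e, he⟩ := hp (g x)
      exact ⟨⟨(e, x), he⟩, rfl⟩)
  obtain ⟨s, hs⟩ := h _ _ _ w hse
  refine ⟨LinearMap.fst R E X ∘ₗ S.subtype ∘ₗ s.hom, ?_⟩
  ext x
  have h1 : p (s.hom x).1.1 = g (s.hom x).1.2 := (s.hom x).2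
  have h2 : (s.hom x).1.2 = x := ConcreteCategory.congr_hom hs x
  rw [h2] at h1
  exact h1

/-- extension property from vanishing of Ext -/
lemma extend_of_ext {C N : ModuleCat.{u} R} (h : ext1Zero C N) {A B : Type u}
    [AddCommGroup A] [AddCommGroup B] [Module R A] [Module R B]
    (f : A →ₗ[R] B) (p : B →ₗ[R] C) (hf : Function.Injective f) (he : Function.Exact f p)
    (hp : Function.Surjective p) (g : A →ₗ[R] N) : ∃ l : B →ₗ[R] N, l ∘ₗ f = g := by
  let K : Submodule R (N × B) := LinearMap.range (g.prod (-f))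
  let k' : N →ₗ[R] (N × B) ⧸ K := K.mkQ ∘ₗ LinearMap.inl R N B
  let p' : ((N × B) ⧸ K) →ₗ[R] C := K.liftQ (p ∘ₗ LinearMap.snd R N B) (by
    rintro _ ⟨a, rfl⟩
    simp [he.apply_apply_eq_zero])
  obtain ⟨w, hse⟩ := se_mk k' p' (by
      rw [← LinearMap.ker_eq_bot, LinearMap.ker_eq_bot']
      intro n hn
      have hn' : (n, (0 : B)) ∈ K := (Submodule.Quotient.mk_eq_zero _).1 hn
      obtain ⟨a, ha⟩ := hn'
      have h1 : g a = n := congrArg Prod.fst ha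
      have h2 : -f a = 0 := congrArg Prod.snd ha
      have h3 : a = 0 := hf (by simpa using h2)
      rw [← h1, h3, map_zero]) (fun z => by
      obtain ⟨⟨n, b⟩, rfl⟩ := K.mkQ_surjective z
      constructor
      · intro hz
        have hz' : p b = 0 := hz
        obtain ⟨a, rfl⟩ := (he _).1 hz'
        refine ⟨n + g a, (Submodule.Quotient.eq _).2 ⟨a, ?_⟩⟩
        ext <;> simp
      · rintro ⟨n', hn'⟩
        rw [← hn']
        show p 0 = 0
        simp) (fun c => by
      obtain ⟨b, rfl⟩ := hp c
      exact ⟨K.mkQ (0, b), rfl⟩)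
  obtain ⟨s, hs⟩ := h _ _ _ w hse
  have hs' : ∀ c, p' (s.hom c) = c := fun c => ConcreteCategory.congr_hom hs c
  obtain ⟨hi, hex, hsu⟩ := ext_of_se _ _ _ hse
  have hk : ∀ b : B, ∃ n : N, k' n = K.mkQ (0, b) - s.hom (p b) := fun b => by
    refine (hex _).1 ?_
    show p' _ = 0
    rw [map_sub, hs', sub_eq_zero]
    rfl
  choose r hr using hk
  refine ⟨{ toFun := r, map_add' := fun x y => hi ?_, map_smul' := fun c x => hi ?_ }, ?_⟩
  · show k' _ = k' _
    rw [map_add, hr, hr, hr]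
    have : ((0 : N), x + y) = (0, x) + (0, y) := by simp
    rw [this, map_add, map_add, map_add]
    abel
  · show k' _ = k' _
    rw [RingHom.id_apply, map_smul, hr, hr]
    have : ((0 : N), c • x) = c • (0, x) := by simp
    rw [this, map_smul, map_smul, map_smul, smul_sub]
  · ext a
    refine hi ?_
    show k' (r (f a)) = k' (g a)
    rw [hr, he.apply_apply_eq_zero, map_zero, sub_zero]
    refine (Submodule.Quotient.eq _).2 ⟨-a, ?_⟩
    ext <;> simp

/-- vanishing of Ext from the extension property -/
lemma ext_of_extend {B C N : ModuleCat.{u} R} (h : ext1Zero B N) {A : Type u}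
    [AddCommGroup A] [Module R A]
    (f : A →ₗ[R] B) (p : B →ₗ[R] C) (he : Function.Exact f p)
    (hp : Function.Surjective p) (hx : ∀ g : A →ₗ[R] N, ∃ l : B →ₗ[R] N, l ∘ₗ f = g) :
    ext1Zero C N := by
  intro E i q w hse
  obtain ⟨hi, hex, hsu⟩ := ext_of_se _ _ _ hse
  obtain ⟨l, hl⟩ := lift_of_ext h i.hom q.hom hi hex hsu p
  have hl' : ∀ b, q.hom (l b) = p b := fun b => LinearMap.congr_fun hl b
  have hr : ∀ a, ∃ n, i.hom n = l (f a) := fun a => (hex _).1 (by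
    rw [hl', he.apply_apply_eq_zero])
  choose r hr using hr
  obtain ⟨m, hm⟩ := hx { toFun := r, map_add' := fun x y => hi (by simp [hr]),
                         map_smul' := fun c x => hi (by simp [hr]) }
  have hm' : ∀ a, m (f a) = r a := fun a => LinearMap.congr_fun hm a
  let l' : B →ₗ[R] E := l - i.hom ∘ₗ m
  have hk : LinearMap.ker p ≤ LinearMap.ker l' := by
    intro b hb
    obtain ⟨a, rfl⟩ := (he _).1 hb
    simp [l', hm', hr]
  have hc : ∀ c : C, ∃ e, ∀ b, p b = c → l' b = e := fun c => by
    obtain ⟨b, rfl⟩ := hp c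
    refine ⟨l' b, fun b' hb' => ?_⟩
    have : b' - b ∈ LinearMap.ker l' := hk (by simp [hb'])
    rw [LinearMap.mem_ker, map_sub, sub_eq_zero] at this
    exact this
  choose s hs using hc
  refine ⟨ModuleCat.ofHom { toFun := s, map_add' := fun x y => ?_, map_smul' := fun c x => ?_ }, ?_⟩
  · obtain ⟨x, rfl⟩ := hp x
    obtain ⟨y, rfl⟩ := hp y
    rw [← hs _ x rfl, ← hs _ y rfl, ← hs _ (x + y) (by simp), map_add]
  · obtain ⟨x, rfl⟩ := hp x
    rw [← hs _ x rfl, ← hs _ (c • x) (by simp), map_smul]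
    rfl
  · ext c
    obtain ⟨b, rfl⟩ := hp c
    show q.hom (s (p b)) = p b
    rw [← hs _ b rfl]
    simp [l', hl', hex.apply_apply_eq_zero]

lemma ext_of_lift {X N : ModuleCat.{u} R}
    (h : ∀ (E : ModuleCat.{u} R) (k : N →ₗ[R] E) (p : E →ₗ[R] X), Function.Injective k →
      Function.Exact k p → Function.Surjective p → ∃ l : X →ₗ[R] E, p ∘ₗ l = LinearMap.id) :
    ext1Zero X N := by
  intro E i q w hse
  obtain ⟨hi, hex, hsu⟩ := ext_of_se _ _ _ hse
  obtain ⟨l, hl⟩ := h E i.hom q.hom hi hex hsu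
  exact ⟨ModuleCat.ofHom l, by ext x; exact LinearMap.congr_fun hl x⟩

lemma ext_inj (X N : ModuleCat.{u} R) [Injective N] : ext1Zero X N := by
  intro E f g w h
  have : Injective (ShortComplex.mk f g w).X₁ := inferInstanceAs (Injective N)
  exact ⟨_, h.splittingOfInjective.s_g⟩

lemma ext_prod {A B N : ModuleCat.{u} R} (hA : ext1Zero A N) (hB : ext1Zero B N) :
    ext1Zero (ModuleCat.of R (A × B)) N := by
  refine ext_of_lift fun E k p hk he hp => ?_
  obtain ⟨l, hl⟩ := lift_of_ext hA k p hk he hp (LinearMap.inl R A B)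
  obtain ⟨m, hm⟩ := lift_of_ext hB k p hk he hp (LinearMap.inr R A B)
  refine ⟨l.coprod m, ?_⟩
  rw [LinearMap.comp_coprod, hl, hm]
  exact LinearMap.coprod_inl_inr

lemma ext_finsupp {A N : ModuleCat.{u} R} (hA : ext1Zero A N) (κ : Type u) :
    ext1Zero (ModuleCat.of R (κ →₀ A)) N := by
  refine ext_of_lift fun E k p hk he hp => ?_
  have := fun i : κ => lift_of_ext hA k p hk he hp (Finsupp.lsingle (R := R) (M := A) i)
  choose l hl using this
  refine ⟨Finsupp.lsum ℕ l, ?_⟩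
  apply Finsupp.lhom_ext'
  intro i
  have : p ∘ₗ Finsupp.lsum ℕ l ∘ₗ Finsupp.lsingle (R := R) (M := A) i = p ∘ₗ l i := by
    congr 1
    ext x
    simp
  exact this.trans (hl i)

lemma ext_sigma {ι : Type u} {A : ι → ModuleCat.{u} R} {N : ModuleCat.{u} R}
    (hA : ∀ i, ext1Zero (A i) N) :
    ext1Zero (∐ A) N := by
  refine ext_of_lift fun E k p hk he hp => ?_
  have := fun i => lift_of_ext (hA i) k p hk he hp (Sigma.ι A i).hom
  choose l hl using this
  refine ⟨(Sigma.desc fun i => ModuleCat.ofHom (l i) : ∐ A ⟶ E).hom, ?_⟩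
  have : (Sigma.desc fun i => ModuleCat.ofHom (l i) : ∐ A ⟶ E) ≫ ModuleCat.ofHom p = 𝟙 _ := by
    refine Sigma.hom_ext _ _ fun i => ?_
    rw [Sigma.ι_desc_assoc]
    ext x
    simpa using LinearMap.congr_fun (hl i) x
  exact congrArg ModuleCat.Hom.hom this

lemma exists_G (P : Type u) [AddCommGroup P] [Module R P] {V : Type u} (I : V → Type u) :
    ∃ κ : Type u, ∀ j, ∃ (e : (P × (I j →₀ (κ →₀ P))) →ₗ[R] (κ →₀ P))
      (r : (κ →₀ P) →ₗ[R] (P × (I j →₀ (κ →₀ P)))), ∀ x, r (e x) = x := by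
  refine ⟨List (Σ j, I j), fun j => ?_⟩
  let c : I j × List (Σ j, I j) → List (Σ j, I j) := fun x => ⟨j, x.1⟩ :: x.2
  have hc : Function.Injective c := by
    rintro ⟨a, l⟩ ⟨a', l'⟩ h
    simp [c] at h
    simp [h]
  have hcn : ∀ x, c x ≠ [] := fun x => by simp [c]
  obtain ⟨eq⟩ : Nonempty ((I j × List (Σ j, I j) →₀ P) ≃ₗ[R] (I j →₀ List (Σ j, I j) →₀ P)) :=
    ⟨Finsupp.curryLinearEquiv R⟩
  obtain ⟨L, hL, hL'⟩ : ∃ L : (List (Σ j, I j) →₀ P) →ₗ[R] (I j × List (Σ j, I j) →₀ P),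
      (∀ f, L (Finsupp.lmapDomain P R c f) = f) ∧
      ∀ p, L (Finsupp.lsingle (R := R) [] p) = 0 := by
    refine ⟨Finsupp.lcomapDomain c hc, Finsupp.leftInverse_lcomapDomain_mapDomain c hc, ?_⟩
    intro p
    ext x
    simp [Finsupp.lcomapDomain, c]
  refine ⟨LinearMap.coprod (Finsupp.lsingle []) (Finsupp.lmapDomain P R c ∘ₗ eq.symm.toLinearMap),
    LinearMap.prod (Finsupp.lapply []) (eq.toLinearMap ∘ₗ L), ?_⟩
  rintro ⟨p, f⟩
  obtain ⟨f, rfl⟩ := eq.surjective f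
  have h1 : Finsupp.mapDomain c f [] = 0 :=
    Finsupp.mapDomain_of_notMem_range _ _ (by rintro ⟨x, hx⟩; exact hcn x hx)
  ext1
  · simp [h1]
  · rw [LinearMap.coprod_apply, LinearMap.prod_apply]
    simp only [Function.prod, LinearMap.comp_apply, LinearEquiv.coe_coe, LinearEquiv.symm_apply_apply,
      map_add, hL, hL', map_zero, zero_add]

end Aux
end QuiverGF

namespace QuiverGF
section Aux1
variable {R : Type u} [Ring R]

lemma descend {B C D : Type u} [AddCommGroup B] [AddCommGroup C] [AddCommGroup D]
    [Module R B] [Module R C] [Module R D] (p : B →ₗ[R] C) (m : B →ₗ[R] D)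
    (hp : Function.Surjective p) (hm : ∀ b, p b = 0 → m b = 0) :
    ∃ m' : C →ₗ[R] D, ∀ b, m' (p b) = m b := by
  refine ⟨(LinearMap.ker p).liftQ m (fun b hb => hm b hb) ∘ₗ
    (p.quotKerEquivOfSurjective hp).symm.toLinearMap, fun b => ?_⟩
  have : (p.quotKerEquivOfSurjective hp).symm (p b) = (LinearMap.ker p).mkQ b := by
    rw [LinearEquiv.symm_apply_eq]
    rfl
  rw [LinearMap.comp_apply, LinearEquiv.coe_coe, this]
  rfl

lemma ext_mid_right {X : ModuleCat.{u} R} {A B C : ModuleCat.{u} R} (f : A →ₗ[R] B)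
    (g : B →ₗ[R] C) (hf : Function.Injective f) (he : Function.Exact f g)
    (hg : Function.Surjective g) (hA : ext1Zero X A) (hC : ext1Zero X C) : ext1Zero X B := by
  refine ext_of_lift fun E k p hk hkp hp => ?_
  let K := LinearMap.range (k ∘ₗ f)
  obtain ⟨k', hk'⟩ := descend g (K.mkQ ∘ₗ k) hg (by
    intro b hb
    obtain ⟨a, rfl⟩ := (he b).1 hb
    exact (Submodule.Quotient.mk_eq_zero _).2 ⟨a, rfl⟩)
  obtain ⟨p', hp'⟩ := descend K.mkQ p K.mkQ_surjective (by
    intro b hb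
    obtain ⟨a, rfl⟩ := (Submodule.Quotient.mk_eq_zero _).1 hb
    exact hkp.apply_apply_eq_zero _)
  obtain ⟨s, hs⟩ := lift_of_ext hC k' p' (by
      rw [← LinearMap.ker_eq_bot, LinearMap.ker_eq_bot']
      intro c hc
      obtain ⟨b, rfl⟩ := hg c
      rw [hk'] at hc
      obtain ⟨a, ha⟩ := (Submodule.Quotient.mk_eq_zero _).1 hc
      rw [← hk ha]
      exact he.apply_apply_eq_zero _) (by
      intro y
      constructor
      · intro hy
        obtain ⟨e, rfl⟩ := K.mkQ_surjective y
        rw [hp'] at hy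
        obtain ⟨b, rfl⟩ := (hkp e).1 hy
        exact ⟨g b, hk' b⟩
      · rintro ⟨c, rfl⟩
        obtain ⟨b, rfl⟩ := hg c
        rw [hk']
        exact (hp' _).trans (hkp.apply_apply_eq_zero _)) (by
      intro x
      obtain ⟨e, rfl⟩ := hp x
      exact ⟨_, hp' e⟩) LinearMap.id
  obtain ⟨l, hl⟩ := lift_of_ext hA (k ∘ₗ f) K.mkQ (hk.comp hf)
    (LinearMap.exact_iff.2 (by simp [K])) K.mkQ_surjective s
  refine ⟨l, ?_⟩
  ext x
  have h1 : K.mkQ (l x) = s x := LinearMap.congr_fun hl x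
  have h2 : p' (s x) = x := LinearMap.congr_fun hs x
  rw [LinearMap.comp_apply, ← hp', h1, h2]
  rfl

lemma ext_mid_left {N : ModuleCat.{u} R} {A B C : ModuleCat.{u} R} (f : A →ₗ[R] B)
    (g : B →ₗ[R] C) (hf : Function.Injective f) (he : Function.Exact f g)
    (hg : Function.Surjective g) (hA : ext1Zero A N) (hC : ext1Zero C N) : ext1Zero B N := by
  refine ext_of_lift fun E k p hk hkp hp => ?_
  obtain ⟨l, hl⟩ := lift_of_ext hA k p hk hkp hp f
  have hl' : ∀ a, p (l a) = f a := fun a => LinearMap.congr_fun hl a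
  let K := LinearMap.range l
  obtain ⟨p', hp'⟩ := descend K.mkQ (g ∘ₗ p) K.mkQ_surjective (by
    intro b hb
    obtain ⟨a, rfl⟩ := (Submodule.Quotient.mk_eq_zero _).1 hb
    rw [LinearMap.comp_apply, hl']
    exact he.apply_apply_eq_zero _)
  obtain ⟨s, hs⟩ := lift_of_ext hC (K.mkQ ∘ₗ k) p' (by
      rw [← LinearMap.ker_eq_bot, LinearMap.ker_eq_bot']
      intro n hn
      obtain ⟨a, ha⟩ := (Submodule.Quotient.mk_eq_zero _).1 hn
      have h1 := hl' a
      rw [ha, hkp.apply_apply_eq_zero] at h1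
      have h2 : a = 0 := hf (by rw [← h1, map_zero])
      apply hk
      rw [← ha, h2, map_zero, map_zero]) (by
      intro y
      constructor
      · intro hy
        obtain ⟨e, rfl⟩ := K.mkQ_surjective y
        rw [hp'] at hy
        obtain ⟨a, ha⟩ := (he _).1 hy
        obtain ⟨n, hn⟩ := (hkp (e - l a)).1 (by rw [map_sub, hl', ha, sub_self])
        refine ⟨n, ?_⟩
        rw [LinearMap.comp_apply, hn, map_sub, sub_eq_self]
        exact (Submodule.Quotient.mk_eq_zero _).2 ⟨a, rfl⟩
      · rintro ⟨n, rfl⟩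
        rw [LinearMap.comp_apply, hp', LinearMap.comp_apply, hkp.apply_apply_eq_zero, map_zero])
      (by
      intro x
      obtain ⟨b, rfl⟩ := hg x
      obtain ⟨e, rfl⟩ := hp b
      exact ⟨_, hp' e⟩) LinearMap.id
  have hs' : ∀ c, p' (s c) = c := fun c => LinearMap.congr_fun hs c
  have hu : ∀ e, p e = 0 → K.mkQ e = 0 → e = 0 := by
    intro e h1 h2
    obtain ⟨a, rfl⟩ := (Submodule.Quotient.mk_eq_zero _).1 h2
    rw [hl'] at h1
    have h2 : a = 0 := hf (by rw [h1, map_zero])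
    rw [h2, map_zero]
  have hu' : ∀ e e', p e = p e' → K.mkQ e = K.mkQ e' → e = e' := by
    intro e e' h1 h2
    rw [← sub_eq_zero]
    apply hu <;> rw [map_sub, sub_eq_zero] <;> assumption
  have hx : ∀ b, ∃ e, p e = b ∧ K.mkQ e = s (g b) := by
    intro b
    obtain ⟨e, he'⟩ := K.mkQ_surjective (s (g b))
    have h1 : g (p e) = g b := by
      have := hp' e
      rw [he', hs'] at this
      exact this.symm
    obtain ⟨a, ha⟩ := (he (b - p e)).1 (by rw [map_sub, h1, sub_self])
    refine ⟨e + l a, by rw [map_add, hl', ha]; abel, ?_⟩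
    rw [map_add, he', add_eq_left]
    exact (Submodule.Quotient.mk_eq_zero _).2 ⟨a, rfl⟩
  choose r hr1 hr2 using hx
  refine ⟨{ toFun := r, map_add' := fun x y => hu' _ _ ?_ ?_,
            map_smul' := fun c x => hu' _ _ ?_ ?_ }, ?_⟩
  · simp only [map_add, hr1]
  · simp only [map_add, hr2]
  · simp only [map_smul, hr1, RingHom.id_apply]
  · simp only [map_smul, hr2, RingHom.id_apply]
  · ext b
    exact hr1 b

end Aux1
end QuiverGF

namespace QuiverGF
section Aux2
variable {R : Type u} [Ring R] {𝒲 𝒳 : Set (ModuleCat.{u} R)}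

/-- The standing hypotheses. -/
structure Hyp (𝒲 𝒳 : Set (ModuleCat.{u} R)) : Prop where
  hXext : ∀ (S : ShortComplex (ModuleCat.{u} R)), S.ShortExact →
      S.X₁ ∈ 𝒳 → S.X₃ ∈ 𝒳 → S.X₂ ∈ 𝒳
  hcp : IsCotorsionPair 𝒲 (rightPerp 𝒲)
  hcomp : IsCompleteCP 𝒲 (rightPerp 𝒲)
  hext : ∀ X ∈ 𝒳, ∀ W ∈ 𝒲 ∩ rightPerp 𝒲, ext1Zero X W
  hcog : IsCogenerator 𝒲 𝒳

/-- Extension property of a linear map with respect to a class. -/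
def ExtProp (𝒴 : Set (ModuleCat.{u} R)) {A B : Type u} [AddCommGroup A] [AddCommGroup B]
    [Module R A] [Module R B] (f : A →ₗ[R] B) : Prop :=
  ∀ N ∈ 𝒴, ∀ g : A →ₗ[R] N, ∃ l : B →ₗ[R] N, ∀ a, l (f a) = g a

namespace Hyp


lemma memW (H : Hyp 𝒲 𝒳) {M : ModuleCat.{u} R} (h : ∀ N ∈ rightPerp 𝒲, ext1Zero M N) : M ∈ 𝒲 := by
  rw [H.hcp.left_eq]
  exact h

lemma W_sub (H : Hyp 𝒲 𝒳) {M : ModuleCat.{u} R} (h : M ∈ 𝒲) : M ∈ 𝒳 := H.hcog.1 h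

lemma W_prod (H : Hyp 𝒲 𝒳) {A B : ModuleCat.{u} R} (hA : A ∈ 𝒲) (hB : B ∈ 𝒲) :
    ModuleCat.of R (A × B) ∈ 𝒲 :=
  H.memW fun _ hN => ext_prod (hN _ hA) (hN _ hB)

lemma W_finsupp (H : Hyp 𝒲 𝒳) {A : ModuleCat.{u} R} (hA : A ∈ 𝒲) (κ : Type u) :
    ModuleCat.of R (κ →₀ A) ∈ 𝒲 :=
  H.memW fun _ hN => ext_finsupp (hN _ hA) κ

lemma W_sigma (H : Hyp 𝒲 𝒳) {ι : Type u} {A : ι → ModuleCat.{u} R} (hA : ∀ i, A i ∈ 𝒲) :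
    ∐ A ∈ 𝒲 :=
  H.memW fun _ hN => ext_sigma fun i => hN _ (hA i)

lemma X_ext (H : Hyp 𝒲 𝒳) {A B C : ModuleCat.{u} R} (f : A →ₗ[R] B) (g : B →ₗ[R] C)
    (hf : Function.Injective f) (he : Function.Exact f g) (hg : Function.Surjective g)
    (hA : A ∈ 𝒳) (hC : C ∈ 𝒳) : B ∈ 𝒳 := by
  obtain ⟨w, h⟩ := se_mk f g hf he hg
  exact H.hXext _ h hA hC

lemma zero_mem (H : Hyp 𝒲 𝒳) : ModuleCat.of R PUnit.{u + 1} ∈ 𝒲 := by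
  refine H.memW fun N _ => ext_of_lift fun E k p _ _ _ => ⟨0, ?_⟩
  ext x

lemma embed (H : Hyp 𝒲 𝒳) {M : ModuleCat.{u} R} (hM : M ∈ 𝒳) :
    ∃ (V C : ModuleCat.{u} R) (v : M →ₗ[R] V) (p : V →ₗ[R] C), Function.Injective v ∧
      Function.Exact v p ∧ Function.Surjective p ∧ C ∈ 𝒳 ∧ V ∈ 𝒲 ∧ V ∈ rightPerp 𝒳 := by
  obtain ⟨W', X', f, g, w, hse, hW', hX'⟩ := H.hcog.2 M hM
  obtain ⟨hf, hfg, hg⟩ := ext_of_se _ _ _ hse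
  obtain ⟨Y, W'', f', g', w', hse', hY, hW''⟩ := H.hcomp.1 W'
  obtain ⟨hf', hfg', hg'⟩ := ext_of_se _ _ _ hse'
  have hYW : Y ∈ 𝒲 := by
    exact H.memW fun N hN => ext_mid_left f'.hom g'.hom hf' hfg' hg' (hN _ hW') (hN _ hW'')
  refine ⟨Y, ModuleCat.of R (Y ⧸ LinearMap.range (f'.hom ∘ₗ f.hom)), f'.hom ∘ₗ f.hom,
    Submodule.mkQ _, hf'.comp hf, ?_, Submodule.mkQ_surjective _, ?_, hYW,
    fun X hX => H.hext X hX Y ⟨hYW, hY⟩⟩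
  · exact LinearMap.exact_iff.2 (by simp)
  · set K := LinearMap.range (f'.hom ∘ₗ f.hom) with hK
    obtain ⟨m, hm⟩ := descend g.hom (K.mkQ ∘ₗ f'.hom) hg (by
      intro b hb
      obtain ⟨a, rfl⟩ := (hfg b).1 hb
      exact (Submodule.Quotient.mk_eq_zero _).2 ⟨a, rfl⟩)
    obtain ⟨n, hn⟩ := descend K.mkQ g'.hom K.mkQ_surjective (by
      intro b hb
      obtain ⟨a, rfl⟩ := (Submodule.Quotient.mk_eq_zero _).1 hb
      exact hfg'.apply_apply_eq_zero _)
    refine H.X_ext (B := ModuleCat.of R (Y ⧸ K)) m n ?_ ?_ ?_ hX' (H.W_sub hW'')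
    · rw [← LinearMap.ker_eq_bot, LinearMap.ker_eq_bot']
      intro c hc
      obtain ⟨b, rfl⟩ := hg c
      rw [hm] at hc
      obtain ⟨a, ha⟩ := (Submodule.Quotient.mk_eq_zero _).1 hc
      rw [← hf' ha]
      exact hfg.apply_apply_eq_zero _
    · intro y
      obtain ⟨b, rfl⟩ := K.mkQ_surjective y
      rw [hn]
      constructor
      · intro hb
        obtain ⟨a, rfl⟩ := (hfg' b).1 hb
        exact ⟨g.hom a, hm a⟩
      · rintro ⟨c, hc⟩
        obtain ⟨a, rfl⟩ := hg c
        rw [hm] at hc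
        rw [← hn, ← hc]
        exact (hn _).trans (hfg'.apply_apply_eq_zero _)
    · intro w
      obtain ⟨b, rfl⟩ := hg' w
      exact ⟨_, hn b⟩

/-- cokernels in `𝒲` -/
lemma coker_mem (H : Hyp 𝒲 𝒳) {A B C : ModuleCat.{u} R} (f : A →ₗ[R] B) (p : B →ₗ[R] C)
    (he : Function.Exact f p) (hp : Function.Surjective p) (hA : A ∈ 𝒲) (hB : B ∈ 𝒲)
    (hx : ExtProp (rightPerp 𝒳) f) : C ∈ 𝒲 := by
  refine H.memW fun Y hY => ext_of_extend (hY _ hB) f p he hp fun g => ?_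
  obtain ⟨Y', W', k, q, w, hse, hY', hW'⟩ := H.hcomp.2 Y
  obtain ⟨hk, hkq, hq⟩ := ext_of_se _ _ _ hse
  have hW'Y : W' ∈ rightPerp 𝒲 := by
    intro X hX
    exact ext_mid_right k.hom q.hom hk hkq hq (hY' X hX) (hY X hX)
  obtain ⟨g', hg'⟩ := lift_of_ext (hY' _ hA) k.hom q.hom hk hkq hq g
  obtain ⟨l, hl⟩ := hx W' (fun X hX => H.hext X hX W' ⟨hW', hW'Y⟩) g'
  refine ⟨q.hom ∘ₗ l, ?_⟩
  rw [← hg']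
  ext a
  simp [hl]

lemma inj_of_extProp {A B : ModuleCat.{u} R} (f : A →ₗ[R] B)
    (hx : ExtProp (rightPerp 𝒳) f) : Function.Injective f := by
  obtain ⟨l, hl⟩ := hx (Injective.under A) (fun X _ => ext_inj _ _) (Injective.ι A).hom
  have hi : Function.Injective (Injective.ι A).hom :=
    (ModuleCat.mono_iff_injective (Injective.ι A)).1 inferInstance
  intro a b hab
  apply hi
  rw [← hl, ← hl, hab]

end Hyp
end Aux2
end QuiverGF

namespace QuiverGF
section Aux3
variable {R : Type u} [Ring R] {𝒲 𝒳 : Set (ModuleCat.{u} R)}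

lemma coker_facts {A B : ModuleCat.{u} R} (f : A ⟶ B) :
    Function.Exact f.hom (cokernel.π f).hom ∧ Function.Surjective (cokernel.π f).hom :=
  ⟨(ShortComplex.ShortExact.moduleCat_exact_iff_function_exact _).1
    (ShortComplex.exact_cokernel f), (ModuleCat.epi_iff_surjective _).1 inferInstance⟩

lemma sig_ext {ι : Type u} {A : ι → ModuleCat.{u} R} {N : Type u} [AddCommGroup N] [Module R N]
    {f g : (↑(∐ A) : Type u) →ₗ[R] N}
    (h : ∀ i x, f ((Sigma.ι A i).hom x) = g ((Sigma.ι A i).hom x)) : f = g := by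
  have : ModuleCat.ofHom f = ModuleCat.ofHom g := by
    refine Sigma.hom_ext _ _ fun i => ?_
    ext x
    exact h i x
  exact congrArg ModuleCat.Hom.hom this

lemma sig_desc {ι : Type u} {A : ι → ModuleCat.{u} R} {N : Type u} [AddCommGroup N] [Module R N]
    (l : ∀ i, A i →ₗ[R] N) :
    ∃ f : (↑(∐ A) : Type u) →ₗ[R] N, ∀ i x, f ((Sigma.ι A i).hom x) = l i x := by
  refine ⟨(Sigma.desc fun i => ModuleCat.ofHom (l i) : ∐ A ⟶ ModuleCat.of R N).hom, fun i x => ?_⟩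
  have := Sigma.ι_desc (fun i => (ModuleCat.ofHom (l i) : A i ⟶ ModuleCat.of R N)) i
  exact ConcreteCategory.congr_hom this x

lemma sig_retract {ι : Type u} (A : ι → ModuleCat.{u} R) (i : ι) :
    ∃ r : (↑(∐ A) : Type u) →ₗ[R] A i, ∀ x, r ((Sigma.ι A i).hom x) = x := by
  classical
  obtain ⟨f, hf⟩ := sig_desc (A := A) (N := A i)
    (fun j => if h : j = i then (by subst h; exact LinearMap.id) else 0)
  refine ⟨f, fun x => ?_⟩
  rw [hf]
  simp

lemma phi_ι {V : Type u} [Quiver.{u} V] (X : Paths V ⥤ ModuleCat.{u} R) (i : V)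
    (p : Σ j : V, j ⟶ i) (x : X.obj (vtx p.1)) :
    (phi X i).hom ((Sigma.ι (fun p : Σ j : V, j ⟶ i => X.obj (vtx p.1)) p).hom x) =
      (X.map p.2.toPath).hom x := by
  have := Sigma.ι_desc (fun p : Σ j : V, j ⟶ i => X.map p.2.toPath) p
  exact ConcreteCategory.congr_hom this x

lemma Hyp.coker_pair (H : Hyp 𝒲 𝒳) {X Y C V B : ModuleCat.{u} R}
    (f : X →ₗ[R] V) (p : V →ₗ[R] C)
    (hf : Function.Injective f) (he : Function.Exact f p) (hp : Function.Surjective p)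
    (hC : C ∈ 𝒳) (hB : B ∈ 𝒳) (c : X →ₗ[R] B) (q : (V × B) →ₗ[R] Y)
    (hq : Function.Surjective q) (hq0 : ∀ x, q (f x, c x) = 0)
    (hq1 : ∀ w, q w = 0 → ∃ x, w = (f x, c x)) : Y ∈ 𝒳 := by
  obtain ⟨m, hm⟩ := descend q (p ∘ₗ LinearMap.fst R V B) hq (by
    intro w hw
    obtain ⟨x, rfl⟩ := hq1 w hw
    exact he.apply_apply_eq_zero x)
  refine H.X_ext (q ∘ₗ LinearMap.inr R V B) m ?_ ?_ ?_ hB hC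
  · rw [← LinearMap.ker_eq_bot, LinearMap.ker_eq_bot']
    intro b hb
    obtain ⟨x, hx⟩ := hq1 _ hb
    have h1 : (0 : V) = f x := congrArg Prod.fst hx
    have h2 : b = c x := congrArg Prod.snd hx
    have h3 : x = 0 := hf (by rw [← h1, map_zero])
    rw [h2, h3, map_zero]
  · intro y
    obtain ⟨⟨a, b⟩, rfl⟩ := hq y
    rw [hm]
    constructor
    · intro h
      obtain ⟨x, hx⟩ := (he _).1 h
      refine ⟨b - c x, ?_⟩
      have : (LinearMap.inr R V B) (b - c x) = (a, b) - (f x, c x) := by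
        ext
        · simp [hx]
        · simp
      rw [LinearMap.comp_apply, this, map_sub, hq0, sub_zero]
    · rintro ⟨b', hb'⟩
      have h1 := hm (0, b')
      have h2 := hm (a, b)
      rw [← h2, ← hb']
      refine h1.trans ?_
      simp
  · intro y
    obtain ⟨a, rfl⟩ := hp y
    exact ⟨q (a, 0), hm _⟩

/-- The data used in the construction. -/
structure Dat {V : Type u} [Quiver.{u} V] (𝒲 𝒳 : Set (ModuleCat.{u} R))
    (X : Paths V ⥤ ModuleCat.{u} R) where
  E : V → ModuleCat.{u} R
  T : V → ModuleCat.{u} R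
  CE : V → ModuleCat.{u} R
  CT : V → ModuleCat.{u} R
  G : ModuleCat.{u} R
  v : ∀ i, X.obj (vtx i) →ₗ[R] E i
  pv : ∀ i, E i →ₗ[R] CE i
  c : ∀ i, X.obj (vtx i) →ₗ[R] T i
  pc : ∀ i, T i →ₗ[R] CT i
  ψ : ∀ {j i : V} (_ : j ⟶ i), E j →ₗ[R] E i
  Q : ∀ i, ((E i × T i) × ((Σ j : V, j ⟶ i) →₀ G)) →ₗ[R] G
  hE : ∀ i, E i ∈ 𝒲
  hEp : ∀ i, E i ∈ rightPerp 𝒳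
  hT : ∀ i, T i ∈ 𝒲
  hCE : ∀ i, CE i ∈ 𝒳
  hCT : ∀ i, CT i ∈ 𝒳
  hG : G ∈ 𝒲
  v_inj : ∀ i, Function.Injective (v i)
  v_ex : ∀ i, Function.Exact (v i) (pv i)
  v_surj : ∀ i, Function.Surjective (pv i)
  c_zero : ∀ i x, c i x = 0 ↔ ∃ y, (phi X i).hom y = x
  c_ex : ∀ i, Function.Exact (c i) (pc i)
  c_surj : ∀ i, Function.Surjective (pc i)
  hψ : ∀ {j i : V} (a : j ⟶ i) x, ψ a (v j x) = v i ((X.map a.toPath).hom x)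
  Q_zero : ∀ i x, Q i ((v i x, c i x), 0) = 0
  Q_ext : ∀ i, ∀ N ∈ rightPerp 𝒳, ∀ g : ((E i × T i) × ((Σ j : V, j ⟶ i) →₀ G)) →ₗ[R] N,
    (∀ x, g ((v i x, c i x), 0) = 0) → ∃ u : G →ₗ[R] N, ∀ w, u (Q i w) = g w

lemma Hyp.exists_dat (H : Hyp 𝒲 𝒳) {V : Type u} [Quiver.{u} V] (X : Paths V ⥤ ModuleCat.{u} R)
    (hX : X ∈ PhiClass (V := V) 𝒳) : Nonempty (Dat 𝒲 𝒳 X) := by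
  choose E CE v pv v_inj v_ex v_surj hCE hE hEp using fun i => H.embed (hX i).2.1
  choose T CT t pc t_inj t_ex t_surj hCT hT hTp using fun i => H.embed (hX i).2.2
  have hψ : ∀ (j i : V) (a : j ⟶ i), ∃ l : E j →ₗ[R] E i,
      l ∘ₗ v j = v i ∘ₗ (X.map a.toPath).hom := fun j i a =>
    extend_of_ext (hEp i _ (hCE j)) (v j) (pv j) (v_inj j) (v_ex j) (v_surj j) _
  choose ψ hψ using hψ
  let c : ∀ i, X.obj (vtx i) →ₗ[R] T i := fun i => t i ∘ₗ (cokernel.π (phi X i)).hom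
  have hP : ∀ i, ∃ (P : ModuleCat.{u} R) (q : (E i × T i) →ₗ[R] P), P ∈ 𝒲 ∧
      (∀ x, q (v i x, c i x) = 0) ∧ ∀ N ∈ rightPerp 𝒳, ∀ g : (E i × T i) →ₗ[R] N,
      (∀ x, g (v i x, c i x) = 0) → ∃ u : P →ₗ[R] N, ∀ w, u (q w) = g w := by
    intro i
    let K := LinearMap.range ((v i).prod (c i))
    have hK0 : ∀ x, K.mkQ (v i x, c i x) = 0 := fun x =>
      (Submodule.Quotient.mk_eq_zero _).2 ⟨x, rfl⟩
    have hK1 : ∀ w, K.mkQ w = 0 → ∃ x, w = (v i x, c i x) := fun w hw => by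
      obtain ⟨x, hx⟩ := (Submodule.Quotient.mk_eq_zero _).1 hw
      exact ⟨x, hx.symm⟩
    have hKX : ModuleCat.of R ((E i × T i) ⧸ K) ∈ 𝒳 :=
      H.coker_pair (Y := ModuleCat.of R ((E i × T i) ⧸ K)) (v i) (pv i) (v_inj i) (v_ex i)
        (v_surj i) (hCE i) (H.W_sub (hT i)) (c i) K.mkQ K.mkQ_surjective hK0 hK1
    obtain ⟨P, C, k, p, hk, hkp, hp, hC, hPW, -⟩ := H.embed hKX
    refine ⟨P, k ∘ₗ K.mkQ, hPW, fun x => ?_, fun N hN g hg => ?_⟩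
    · rw [LinearMap.comp_apply, hK0]
      exact map_zero k
    · obtain ⟨g', hg'⟩ := descend K.mkQ g K.mkQ_surjective (fun w hw => by
        obtain ⟨x, rfl⟩ := hK1 w hw
        exact hg x)
      obtain ⟨u, hu⟩ := extend_of_ext (hN _ hC) k p hk hkp hp g'
      refine ⟨u, fun w => ?_⟩
      rw [← hg', ← hu]
      rfl
  choose P q hPW hq0 hq1 using hP
  obtain ⟨κ, hκ⟩ := exists_G (R := R) (↑(∐ P) : Type u) (fun i : V => Σ j : V, j ⟶ i)
  choose e r hre using hκ
  have hG : ModuleCat.of R (κ →₀ (↑(∐ P) : Type u)) ∈ 𝒲 := H.W_finsupp (H.W_sigma hPW) κ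
  let Q : ∀ i, ((E i × T i) × ((Σ j : V, j ⟶ i) →₀ (κ →₀ (↑(∐ P) : Type u)))) →ₗ[R]
      (κ →₀ (↑(∐ P) : Type u)) := fun i =>
    e i ∘ₗ LinearMap.prodMap ((Sigma.ι P i).hom ∘ₗ q i) LinearMap.id
  refine ⟨⟨E, T, CE, CT, _, v, pv, c, pc, fun {j i} a => ψ j i a, Q, hE, hEp, hT, hCE, hCT, hG,
    v_inj, v_ex, v_surj, ?_, ?_, t_surj, ?_, ?_, ?_⟩⟩
  · intro i x
    obtain ⟨h1, h2⟩ := coker_facts (phi X i)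
    have : c i x = 0 ↔ (cokernel.π (phi X i)).hom x = 0 := by
      constructor
      · intro h
        exact t_inj i (h.trans (map_zero _).symm)
      · intro h
        show t i _ = 0
        rw [h, map_zero]
    rw [this]
    exact h1 x
  · intro i y
    obtain ⟨h1, h2⟩ := coker_facts (phi X i)
    rw [t_ex i y]
    constructor
    · rintro ⟨z, rfl⟩
      obtain ⟨x, rfl⟩ := h2 z
      exact ⟨x, rfl⟩
    · rintro ⟨x, rfl⟩
      exact ⟨_, rfl⟩
  · intro j i a x
    exact LinearMap.congr_fun (hψ j i a) x
  · intro i x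
    show e i ((Sigma.ι P i).hom (q i (v i x, c i x)), 0) = 0
    rw [hq0, map_zero]
    exact map_zero (e i)
  · intro i N hN g hg
    obtain ⟨u, hu⟩ := hq1 i N hN (g ∘ₗ LinearMap.inl R _ _) hg
    obtain ⟨s, hs⟩ := sig_retract P i
    refine ⟨((u ∘ₗ s).coprod (g ∘ₗ LinearMap.inr R _ _)) ∘ₗ r i, fun w => ?_⟩
    show ((u ∘ₗ s).coprod (g ∘ₗ LinearMap.inr R _ _)) (r i (e i _)) = _
    rw [hre]
    show u (s ((Sigma.ι P i).hom (q i w.1))) + g (0, w.2) = g w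
    rw [hs, hu]
    show g (w.1, 0) + g (0, w.2) = g w
    rw [← map_add]
    congr 1
    ext1 <;> simp

end Aux3
end QuiverGF

namespace QuiverGF
section Aux4
variable {R : Type u} [Ring R] {𝒲 𝒳 : Set (ModuleCat.{u} R)}
variable {V : Type u} [Quiver.{u} V] {X : Paths V ⥤ ModuleCat.{u} R}

namespace Dat

/-- The free part. -/
abbrev F (D : Dat 𝒲 𝒳 X) (i : V) : Type u := (Σ j : V, j ⟶ i) →₀ D.G

/-- The vertex modules of the representation. -/
abbrev WM (D : Dat 𝒲 𝒳 X) (i : V) : Type u := (D.E i × D.T i) × D.F i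

/-- The arrow maps of the representation. -/
noncomputable def wmap (D : Dat 𝒲 𝒳 X) {j i : V} (a : j ⟶ i) : D.WM j →ₗ[R] D.WM i :=
  LinearMap.prod
    (LinearMap.inl R (D.E i) (D.T i) ∘ₗ D.ψ a ∘ₗ LinearMap.fst R (D.E j) (D.T j) ∘ₗ
      LinearMap.fst R _ _)
    (Finsupp.lsingle (R := R) (M := D.G) (⟨j, a⟩ : Σ j : V, j ⟶ i) ∘ₗ D.Q j)

lemma wmap_apply (D : Dat 𝒲 𝒳 X) {j i : V} (a : j ⟶ i) (w : D.WM j) :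
    D.wmap a w = ((D.ψ a w.1.1, 0), Finsupp.single ⟨j, a⟩ (D.Q j w)) := rfl

/-- The embedding at a vertex. -/
noncomputable def wI (D : Dat 𝒲 𝒳 X) (i : V) : X.obj (vtx i) →ₗ[R] D.WM i :=
  LinearMap.inl R _ _ ∘ₗ (D.v i).prod (D.c i)

lemma wI_apply (D : Dat 𝒲 𝒳 X) (i : V) (x : X.obj (vtx i)) :
    D.wI i x = ((D.v i x, D.c i x), 0) := rfl

lemma c_map (D : Dat 𝒲 𝒳 X) {j i : V} (a : j ⟶ i) (x : X.obj (vtx j)) :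
    D.c i ((X.map a.toPath).hom x) = 0 :=
  (D.c_zero i _).2 ⟨_, phi_ι X i ⟨j, a⟩ x⟩

lemma wmap_wI (D : Dat 𝒲 𝒳 X) {j i : V} (a : j ⟶ i) (x : X.obj (vtx j)) :
    D.wmap a (D.wI j x) = D.wI i ((X.map a.toPath).hom x) := by
  rw [wmap_apply, wI_apply, wI_apply, D.Q_zero, D.hψ, D.c_map, Finsupp.single_zero]

/-- Forget the `T` component. -/
noncomputable def pr (D : Dat 𝒲 𝒳 X) (i : V) : D.WM i →ₗ[R] (D.E i × D.F i) :=
  LinearMap.prodMap (LinearMap.fst R (D.E i) (D.T i)) LinearMap.id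

/-- Insert zero as the `T` component. -/
noncomputable def inc (D : Dat 𝒲 𝒳 X) (i : V) : (D.E i × D.F i) →ₗ[R] D.WM i :=
  LinearMap.prodMap (LinearMap.inl R (D.E i) (D.T i)) LinearMap.id

/-- The `T` component. -/
noncomputable def tc (D : Dat 𝒲 𝒳 X) (i : V) : D.WM i →ₗ[R] D.T i :=
  LinearMap.snd R (D.E i) (D.T i) ∘ₗ LinearMap.fst R _ _

lemma pr_apply (D : Dat 𝒲 𝒳 X) (i : V) (w : D.WM i) : D.pr i w = (w.1.1, w.2) := rfl
lemma inc_apply (D : Dat 𝒲 𝒳 X) (i : V) (w : D.E i × D.F i) :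
    D.inc i w = ((w.1, 0), w.2) := rfl
lemma tc_apply (D : Dat 𝒲 𝒳 X) (i : V) (w : D.WM i) : D.tc i w = w.1.2 := rfl

lemma inc_pr (D : Dat 𝒲 𝒳 X) (i : V) (w : D.WM i) (h : D.tc i w = 0) :
    D.inc i (D.pr i w) = w := by
  obtain ⟨⟨e, t⟩, f⟩ := w
  have : t = 0 := h
  subst this
  rfl

lemma ext_core (D : Dat 𝒲 𝒳 X) (i : V) (N : ModuleCat.{u} R) (hN : N ∈ rightPerp 𝒳)
    (g : ∀ p : Σ j : V, j ⟶ i, D.WM p.1 →ₗ[R] N) (k : D.E i →ₗ[R] N)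
    (h : ∀ (p : Σ j : V, j ⟶ i) x, k (D.v i ((X.map p.2.toPath).hom x)) = g p (D.wI p.1 x)) :
    ∃ l : (D.E i × D.F i) →ₗ[R] N, (∀ e, l (e, 0) = k e) ∧
      ∀ (p : Σ j : V, j ⟶ i) w, l (D.pr i (D.wmap p.2 w)) = g p w := by
  have := fun p : Σ j : V, j ⟶ i => D.Q_ext p.1 N hN
    (g p - k ∘ₗ D.ψ p.2 ∘ₗ LinearMap.fst R (D.E p.1) (D.T p.1) ∘ₗ LinearMap.fst R _ _) (by
      intro x
      have h1 := h p x
      rw [← D.hψ] at h1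
      show g p (D.wI p.1 x) - k (D.ψ p.2 (D.v p.1 x)) = 0
      rw [h1, sub_self])
  choose u' hu using this
  refine ⟨k.coprod (Finsupp.lsum ℕ u'), fun e => ?_, fun p w => ?_⟩
  · rw [LinearMap.coprod_apply, map_zero, add_zero]
  · rw [LinearMap.coprod_apply, D.wmap_apply, D.pr_apply]
    show k (D.ψ p.2 w.1.1) + Finsupp.lsum ℕ u' (Finsupp.single p (D.Q p.1 w)) = g p w
    rw [Finsupp.lsum_single, hu]
    show k (D.ψ p.2 w.1.1) + (g p w - k (D.ψ p.2 w.1.1)) = g p w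
    abel

end Dat

/-- A representation built out of the data. -/
structure RD (D : Dat 𝒲 𝒳 X) where
  W : Paths V ⥤ ModuleCat.{u} R
  θ : ∀ i : V, W.obj (vtx i) ≃ₗ[R] D.WM i
  ι : X ⟶ W
  hmap : ∀ {j i : V} (a : j ⟶ i) w, θ i ((W.map a.toPath).hom w) = D.wmap a (θ j w)
  hι : ∀ (i : V) x, θ i ((ι.app (vtx i)).hom x) = D.wI i x

lemma Dat.exists_RD (D : Dat 𝒲 𝒳 X) : Nonempty (RD D) := by
  let φ : V ⥤q ModuleCat.{u} R :=
    { obj := fun i => ModuleCat.of R (D.WM i)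
      map := fun {j i} a => ModuleCat.ofHom (D.wmap a) }
  let W := Paths.lift φ
  have hW : ∀ {j i : V} (a : j ⟶ i), W.map a.toPath = ModuleCat.ofHom (D.wmap a) :=
    fun a => Paths.lift_toPath φ a
  let θ : ∀ i : V, W.obj (vtx i) ≃ₗ[R] D.WM i := fun i => LinearEquiv.refl R (D.WM i)
  refine ⟨⟨W, θ, Paths.liftNatTrans (fun i => ModuleCat.ofHom (D.wI i)) ?_, ?_, ?_⟩⟩
  · intro j i a
    rw [hW]
    ext x
    exact (D.wmap_wI a x).symm
  · intro j i a w
    rw [hW]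
    rfl
  · intro i x
    rfl

namespace RD

variable {D : Dat 𝒲 𝒳 X}

lemma ι_inj (W : RD D) (i : V) : Function.Injective (W.ι.app (vtx i)).hom := by
  intro x y h
  have h1 : D.wI i x = D.wI i y := by rw [← W.hι, ← W.hι, h]
  exact D.v_inj i (congrArg (fun z => z.1.1) h1)

/-- The total structure map in concrete form. -/
noncomputable def f (W : RD D) (i : V) :
    (↑(∐ fun p : Σ j : V, j ⟶ i => W.W.obj (vtx p.1)) : Type u) →ₗ[R] D.WM i :=
  (W.θ i).toLinearMap ∘ₗ (phi W.W i).hom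

lemma f_ι (W : RD D) (i : V) (p : Σ j : V, j ⟶ i) (w : W.W.obj (vtx p.1)) :
    W.f i ((Sigma.ι (fun p : Σ j : V, j ⟶ i => W.W.obj (vtx p.1)) p).hom w) =
      D.wmap p.2 (W.θ p.1 w) := by
  rw [← W.hmap, ← phi_ι]
  rfl

lemma tc_f (W : RD D) (i : V) (z) : D.tc i (W.f i z) = 0 := by
  have : D.tc i ∘ₗ W.f i = 0 := by
    refine sig_ext fun p w => ?_
    rw [LinearMap.comp_apply, W.f_ι]
    rfl
  exact LinearMap.congr_fun this z

lemma extProp (H : Hyp 𝒲 𝒳) (hX : X ∈ PhiClass (V := V) 𝒳) (W : RD D) (i : V) :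
    ExtProp (rightPerp 𝒳) (D.pr i ∘ₗ W.f i) := by
  intro N hN h
  obtain ⟨h1, h2⟩ := coker_facts (phi X i)
  have h3 : Function.Injective (phi X i).hom := (ModuleCat.mono_iff_injective _).1 (hX i).1
  let g : ∀ p : Σ j : V, j ⟶ i, D.WM p.1 →ₗ[R] N := fun p =>
    h ∘ₗ (Sigma.ι (fun p : Σ j : V, j ⟶ i => W.W.obj (vtx p.1)) p).hom ∘ₗ
      (W.θ p.1).symm.toLinearMap
  obtain ⟨k0, hk0⟩ := sig_desc (A := fun p : Σ j : V, j ⟶ i => X.obj (vtx p.1))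
    (fun p => g p ∘ₗ D.wI p.1)
  obtain ⟨k1, hk1⟩ := extend_of_ext (hN _ (hX i).2.2) (phi X i).hom _ h3 h1 h2 k0
  obtain ⟨k, hk⟩ := extend_of_ext (hN _ (D.hCE i)) (D.v i) _ (D.v_inj i) (D.v_ex i)
    (D.v_surj i) k1
  obtain ⟨l, hl0, hl⟩ := D.ext_core i N hN g k (by
    intro p x
    have e1 := LinearMap.congr_fun hk ((X.map p.2.toPath).hom x)
    refine e1.trans ?_
    rw [← phi_ι]
    exact (LinearMap.congr_fun hk1 _).trans (hk0 p x))
  refine ⟨l, fun a => ?_⟩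
  have : l ∘ₗ D.pr i ∘ₗ W.f i = h := by
    refine sig_ext fun p w => ?_
    rw [LinearMap.comp_apply, LinearMap.comp_apply, W.f_ι, hl]
    simp [g]
  exact LinearMap.congr_fun this a

lemma memW (H : Hyp 𝒲 𝒳) (W : RD D) (i : V) : W.W.obj (vtx i) ∈ 𝒲 := by
  refine H.memW fun N hN => ?_
  have h1 : ModuleCat.of R (D.WM i) ∈ 𝒲 :=
    H.W_prod (A := ModuleCat.of R (D.E i × D.T i)) (B := ModuleCat.of R (D.F i))
      (H.W_prod (D.hE i) (D.hT i)) (H.W_finsupp D.hG _)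
  refine ext_of_lift fun E k p hk he hp => ?_
  obtain ⟨l, hl⟩ := lift_of_ext (hN _ h1) k p hk he hp (W.θ i).symm.toLinearMap
  refine ⟨l ∘ₗ (W.θ i).toLinearMap, ?_⟩
  ext x
  have := LinearMap.congr_fun hl (W.θ i x)
  exact this.trans ((W.θ i).symm_apply_apply x)

lemma mem_phi (H : Hyp 𝒲 𝒳) (hX : X ∈ PhiClass (V := V) 𝒳) (W : RD D) :
    W.W ∈ PhiClass (V := V) 𝒲 := by
  intro i
  have h1 : ExtProp (rightPerp 𝒳) (phi W.W i).hom := by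
    intro N hN g
    obtain ⟨l, hl⟩ := W.extProp H hX i N hN g
    exact ⟨l ∘ₗ D.pr i ∘ₗ (W.θ i).toLinearMap, hl⟩
  refine ⟨(ModuleCat.mono_iff_injective _).2 (Hyp.inj_of_extProp _ h1), W.memW H i, ?_⟩
  exact H.coker_mem _ _ (coker_facts (phi W.W i)).1 (coker_facts (phi W.W i)).2
    (H.W_sigma fun p => W.memW H p.1) (W.memW H i) h1

end RD
end Aux4
end QuiverGF

namespace QuiverGF
section Aux5
variable {R : Type u} [Ring R] {𝒲 𝒳 : Set (ModuleCat.{u} R)}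
variable {V : Type u} [Quiver.{u} V] {X : Paths V ⥤ ModuleCat.{u} R}

namespace RD

variable {D : Dat 𝒲 𝒳 X}

lemma mem_phi_Y (H : Hyp 𝒲 𝒳) (hX : X ∈ PhiClass (V := V) 𝒳) (W : RD D)
    (Y : Paths V ⥤ ModuleCat.{u} R) (π : W.W ⟶ Y)
    (hs : ∀ i : V, Function.Surjective (π.app (vtx i)).hom)
    (he : ∀ i : V, Function.Exact (W.ι.app (vtx i)).hom (π.app (vtx i)).hom) :
    Y ∈ PhiClass (V := V) 𝒳 := by
  -- concrete projections
  let q : ∀ i : V, D.WM i →ₗ[R] Y.obj (vtx i) := fun i =>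
    (π.app (vtx i)).hom ∘ₗ (W.θ i).symm.toLinearMap
  have hqs : ∀ i, Function.Surjective (q i) := fun i => (hs i).comp (W.θ i).symm.surjective
  have hqθ : ∀ i w, q i (W.θ i w) = (π.app (vtx i)).hom w := fun i w => by simp [q]
  have hq0 : ∀ i x, q i (D.wI i x) = 0 := fun i x => by
    rw [← W.hι, hqθ]
    exact (he i).apply_apply_eq_zero x
  have hq1 : ∀ i w, q i w = 0 → ∃ x, w = D.wI i x := fun i w hw => by
    obtain ⟨x, hx⟩ := (he i _).1 hw
    refine ⟨x, ?_⟩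
    rw [← W.hι, hx]
    simp
  have hqm : ∀ {j i : V} (a : j ⟶ i) (w : D.WM j),
      (Y.map a.toPath).hom (q j w) = q i (D.wmap a w) := fun {j i} a w => by
    obtain ⟨w, rfl⟩ := (W.θ j).surjective w
    rw [hqθ, ← W.hmap, hqθ]
    exact (ConcreteCategory.congr_hom (π.naturality a.toPath) w).symm
  intro i
  obtain ⟨S, hS⟩ := sig_desc (A := fun p : Σ j : V, j ⟶ i => W.W.obj (vtx p.1))
    (fun p => (Sigma.ι (fun p : Σ j : V, j ⟶ i => Y.obj (vtx p.1)) p).hom ∘ₗ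
      (π.app (vtx p.1)).hom)
  have hSs : Function.Surjective S := by
    have : (LinearMap.range S).mkQ = 0 := by
      refine sig_ext fun p y => ?_
      obtain ⟨w, rfl⟩ := hs p.1 y
      exact (Submodule.Quotient.mk_eq_zero _).2 ⟨_, hS p w⟩
    rw [← LinearMap.range_eq_top, ← (LinearMap.range S).ker_mkQ, this, LinearMap.ker_zero]
  have hSf : ∀ z, (phi Y i).hom (S z) = q i (W.f i z) := by
    have : (phi Y i).hom ∘ₗ S = q i ∘ₗ W.f i := by
      refine sig_ext fun p w => ?_
      rw [LinearMap.comp_apply, LinearMap.comp_apply, hS, W.f_ι, ← hqm, hqθ]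
      exact phi_ι Y i p _
    exact fun z => LinearMap.congr_fun this z
  obtain ⟨SX, hSX⟩ := sig_desc (A := fun p : Σ j : V, j ⟶ i => X.obj (vtx p.1))
    (fun p => (Sigma.ι (fun p : Σ j : V, j ⟶ i => W.W.obj (vtx p.1)) p).hom ∘ₗ
      (W.ι.app (vtx p.1)).hom)
  have hSXf : ∀ z, D.wI i ((phi X i).hom z) = W.f i (SX z) := by
    have : D.wI i ∘ₗ (phi X i).hom = W.f i ∘ₗ SX := by
      refine sig_ext fun p x => ?_
      rw [LinearMap.comp_apply, LinearMap.comp_apply, hSX, phi_ι, LinearMap.comp_apply, W.f_ι,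
        W.hι, D.wmap_wI]
    exact fun z => LinearMap.congr_fun this z
  refine ⟨?_, ?_, ?_⟩
  · refine (ModuleCat.mono_iff_injective _).2
      (Hyp.inj_of_extProp (𝒳 := 𝒳) (phi Y i).hom ?_)
    intro N hN h
    obtain ⟨l, hl0, hl⟩ := D.ext_core i N hN
      (fun p => h ∘ₗ (Sigma.ι (fun p : Σ j : V, j ⟶ i => Y.obj (vtx p.1)) p).hom ∘ₗ q p.1) 0 (by
        intro p x
        rw [LinearMap.comp_apply, LinearMap.comp_apply, hq0, map_zero, map_zero]
        rfl)
    obtain ⟨m, hm⟩ := descend (q i) (l ∘ₗ D.pr i) (hqs i) (by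
      intro w hw
      obtain ⟨x, rfl⟩ := hq1 i w hw
      exact hl0 _)
    refine ⟨m, fun a => ?_⟩
    have : m ∘ₗ (phi Y i).hom = h := by
      refine sig_ext fun p y => ?_
      obtain ⟨w, rfl⟩ := hqs p.1 y
      rw [LinearMap.comp_apply, phi_ι, hqm, hm]
      exact hl p w
    exact LinearMap.congr_fun this a
  · let s : (D.E i × (D.T i × D.F i)) →ₗ[R] D.WM i :=
      (LinearEquiv.prodAssoc R (D.E i) (D.T i) (D.F i)).symm.toLinearMap
    have hTF : ModuleCat.of R (D.T i × D.F i) ∈ 𝒲 :=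
      H.W_prod (B := ModuleCat.of R (D.F i)) (D.hT i) (H.W_finsupp D.hG _)
    refine H.coker_pair (B := ModuleCat.of R (D.T i × D.F i)) (D.v i) (D.pv i) (D.v_inj i)
      (D.v_ex i) (D.v_surj i) (D.hCE i) (H.W_sub hTF) ((D.c i).prod 0) (q i ∘ₗ s) ?_ ?_ ?_
    · exact (hqs i).comp (LinearEquiv.prodAssoc R (D.E i) (D.T i) (D.F i)).symm.surjective
    · intro x
      exact hq0 i x
    · rintro ⟨e, t, f⟩ hw
      obtain ⟨x, hx⟩ := hq1 i ((e, t), f) hw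
      rw [D.wI_apply, Prod.mk.injEq, Prod.mk.injEq] at hx
      obtain ⟨⟨rfl, rfl⟩, rfl⟩ := hx
      exact ⟨x, rfl⟩
  · obtain ⟨k1, k2⟩ := coker_facts (phi Y i)
    set P := (cokernel.π (phi Y i)).hom with hP
    let f' := D.pr i ∘ₗ W.f i
    have hinc : ∀ z, D.inc i (f' z) = W.f i z := fun z => D.inc_pr i _ (W.tc_f i z)
    let K := LinearMap.range f'
    have hEF : ModuleCat.of R (D.E i × D.F i) ∈ 𝒲 :=
      H.W_prod (B := ModuleCat.of R (D.F i)) (D.hE i) (H.W_finsupp D.hG _)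
    have hZ : ModuleCat.of R ((D.E i × D.F i) ⧸ K) ∈ 𝒲 :=
      H.coker_mem (B := ModuleCat.of R (D.E i × D.F i))
        (C := ModuleCat.of R ((D.E i × D.F i) ⧸ K)) f' K.mkQ
        (LinearMap.exact_iff.2 (by simp [K])) K.mkQ_surjective
        (H.W_sigma fun p => W.memW H p.1) hEF (W.extProp H hX i)
    obtain ⟨m, hm⟩ := descend K.mkQ (P ∘ₗ q i ∘ₗ D.inc i) K.mkQ_surjective (by
      intro b hb
      obtain ⟨z, rfl⟩ := (Submodule.Quotient.mk_eq_zero _).1 hb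
      rw [LinearMap.comp_apply, LinearMap.comp_apply, hinc, ← hSf]
      exact k1.apply_apply_eq_zero _)
    obtain ⟨n0, hn0⟩ := descend (q i) (D.pc i ∘ₗ D.tc i) (hqs i) (by
      intro w hw
      obtain ⟨x, rfl⟩ := hq1 i w hw
      exact (D.c_ex i).apply_apply_eq_zero x)
    obtain ⟨n, hn⟩ := descend P n0 k2 (by
      intro y hy
      obtain ⟨z, rfl⟩ := (k1 y).1 hy
      obtain ⟨z, rfl⟩ := hSs z
      rw [hSf, hn0, LinearMap.comp_apply, W.tc_f, map_zero])
    refine H.X_ext (A := ModuleCat.of R ((D.E i × D.F i) ⧸ K)) m n ?_ ?_ ?_ (H.W_sub hZ) (D.hCT i)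
    · rw [← LinearMap.ker_eq_bot, LinearMap.ker_eq_bot']
      intro b hb
      obtain ⟨b, rfl⟩ := K.mkQ_surjective b
      rw [hm] at hb
      obtain ⟨z, hz⟩ := (k1 _).1 hb
      obtain ⟨z, rfl⟩ := hSs z
      rw [hSf] at hz
      obtain ⟨x, hx⟩ := hq1 i (D.inc i b - W.f i z) (by
        rw [map_sub, hz]
        exact sub_self _)
      have h1 : D.c i x = 0 := by
        have := congrArg (D.tc i) hx
        rw [map_sub, W.tc_f, sub_zero] at this
        exact this.symm
      obtain ⟨x', rfl⟩ := (D.c_zero i x).1 h1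
      rw [hSXf, sub_eq_iff_eq_add, ← map_add] at hx
      refine (Submodule.Quotient.mk_eq_zero _).2 ⟨SX x' + z, ?_⟩
      exact (congrArg (D.pr i) hx).symm
    · intro y
      obtain ⟨y, rfl⟩ := k2 y
      obtain ⟨w, rfl⟩ := hqs i y
      rw [hn, hn0]
      constructor
      · intro h
        obtain ⟨x, hx⟩ := (D.c_ex i _).1 h
        have h1 : D.tc i (w - D.wI i x) = 0 := by
          rw [map_sub, ← hx]
          exact sub_self _
        refine ⟨K.mkQ (D.pr i (w - D.wI i x)), ?_⟩
        rw [hm, LinearMap.comp_apply, LinearMap.comp_apply, D.inc_pr i _ h1, map_sub, hq0,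
          sub_zero]
      · rintro ⟨b, hb⟩
        obtain ⟨b, rfl⟩ := K.mkQ_surjective b
        rw [hm] at hb
        rw [← hn0, ← hn, ← hb]
        show n (P (q i (D.inc i b))) = 0
        rw [hn, hn0]
        exact map_zero (D.pc i)
    · intro t
      obtain ⟨t, rfl⟩ := D.c_surj i t
      refine ⟨P (q i ((0, t), 0)), ?_⟩
      rw [hn, hn0]
      rfl

end RD

lemma Hyp.main (H : Hyp 𝒲 𝒳) :
    IsCogenerator (PhiClass (V := V) 𝒲) (PhiClass (V := V) 𝒳) := by
  refine ⟨fun Z hZ i => ⟨(hZ i).1, H.W_sub (hZ i).2.1, H.W_sub (hZ i).2.2⟩, fun X hX => ?_⟩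
  obtain ⟨D⟩ := H.exists_dat X hX
  obtain ⟨W⟩ := D.exists_RD
  have hm : ∀ i : Paths V, Mono (W.ι.app i) := fun i =>
    (ModuleCat.mono_iff_injective _).2 (W.ι_inj i)
  have hm' : Mono W.ι := NatTrans.mono_of_mono_app _
  have hse : (ShortComplex.mk W.ι (cokernel.π W.ι) (cokernel.condition _)).ShortExact :=
    { exact := ShortComplex.exact_cokernel W.ι }
  have hi := fun i : V => hse.map_of_exact ((evaluation (Paths V) (ModuleCat.{u} R)).obj (vtx i))
  have hi' := fun i : V => ext_of_se _ _ _ (hi i)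
  exact ⟨W.W, cokernel W.ι, W.ι, cokernel.π W.ι, cokernel.condition _, hse, W.mem_phi H hX,
    W.mem_phi_Y H hX _ _ (fun i => (hi' i).2.2) (fun i => (hi' i).2.1)⟩

end Aux5
end QuiverGF


section Statements

open CategoryTheory CategoryTheory.Limits Opposite QuiverGF
open scoped DirectSum

theorem stmt11 (R : Type u) [Ring R] (V : Type u) [Quiver.{u} V] (hV : LeftRooted V)
    (𝒲 𝒳 : Set (ModuleCat.{u} R))
    (hXext : ∀ (S : ShortComplex (ModuleCat.{u} R)), S.ShortExact →
      S.X₁ ∈ 𝒳 → S.X₃ ∈ 𝒳 → S.X₂ ∈ 𝒳)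
    (hcp : IsCotorsionPair 𝒲 (rightPerp 𝒲)) (hcomp : IsCompleteCP 𝒲 (rightPerp 𝒲))
    (hext : ∀ X ∈ 𝒳, ∀ W ∈ 𝒲 ∩ rightPerp 𝒲, ext1Zero X W)
    (hcog : IsCogenerator 𝒲 𝒳) :
    IsCogenerator (PhiClass (V := V) 𝒲) (PhiClass (V := V) 𝒳) := by
  exact Hyp.main ⟨hXext, hcp, hcomp, hext, hcog⟩

end Statements
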